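/- Let γ > 0, δ > 0, and let f, g be two positive continuous functions on [0, ∞) such that f is non-decreasing and g is non-increasing, and for x > 0 the integrals I^{α,β,η,μ}_{x,k}[f^γ g^δ], I^{α,β,η,μ}_{x,k}[f^γ], I^{α,β,η,μ}_{x,k}[g^δ] and I^{α,β,η,μ}_{x,k}[1] are finite. Then for every ρ ∈ (0, x): I^{α,β,η,μ}_{x,k}[f^γ g^δ] + f(ρ)^γ g(ρ)^δ · I^{α,β,η,μ}_{x,k}[1] ≤ g(ρ)^δ · I^{α,β,η,μ}_{x,k}[f^γ] + f(ρ)^γ · I^{α,β,η,μ}_{x,k}[g^δ]. -/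

import Mathlib

/-!
The parameter hypotheses give `α > 0`, `α + β + μ > 0` and `-η > 0`, so every coefficient of the
hypergeometric series in the kernel is nonnegative, and the series is evaluated at an argument in
`[0, 1)`; hence the kernel is nonnegative on `(0, x)` (`Fker_nonneg`). Since `f ^ γ` is monotone and
`g ^ δ` is antitone, `(f τ ^ γ - f ρ ^ γ) * (g ρ ^ δ - g τ ^ δ) ≥ 0` for `τ ≥ 0`
(`mul_add_mul_le_of_opposite`). Expanding this product, multiplying by the kernel and integrating
over `τ` gives the claim.
-/

open MeasureTheory Real Set

/-- The Gauss hypergeometric series `₂F₁(a, b; c; z)`. -/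
noncomputable def gauss2F1 (a b c z : ℝ) : ℝ :=
  ∑' n : ℕ, ((ascPochhammer ℝ n).eval a * (ascPochhammer ℝ n).eval b /
    ((ascPochhammer ℝ n).eval c * (n.factorial : ℝ))) * z ^ n

/-- The kernel `F(x, τ)` of the generalized k-fractional integral operator. -/
noncomputable def Fker (α β η μ k x τ : ℝ) : ℝ :=
  ((k + 1) ^ (μ + β + 1) * x ^ ((k + 1) * (-α - β - 2 * μ)) / Real.Gamma α) *
    τ ^ ((k + 1) * μ) * (x ^ (k + 1) - τ ^ (k + 1)) ^ (α - 1) *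
    gauss2F1 (α + β + μ) (-η) α (1 - (τ / x) ^ (k + 1))

/-- The generalized k-fractional integral operator `I^{α,β,η,μ}_{x,k}[f]`. -/
noncomputable def genKInt (α β η μ k x : ℝ) (f : ℝ → ℝ) : ℝ :=
  ∫ τ in (0:ℝ)..x, Fker α β η μ k x τ * τ ^ k * f τ

/-- Nonnegativity needs no convergence: a divergent `tsum` has the value `0`. -/
lemma gauss2F1_nonneg {a b c z : ℝ} (ha : 0 < a) (hb : 0 < b) (hc : 0 < c) (hz : 0 ≤ z) :
    0 ≤ gauss2F1 a b c z := by
  refine tsum_nonneg fun n => ?_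
  have h1 := ascPochhammer_pos n a ha
  have h2 := ascPochhammer_pos n b hb
  have h3 := ascPochhammer_pos n c hc
  positivity

lemma Fker_nonneg {α β η μ k x τ : ℝ} (hk : 0 ≤ k) (hα : 0 < α) (hs : 0 < α + β + μ)
    (hη : η < 0) (hτ : 0 < τ) (hτx : τ ≤ x) : 0 ≤ Fker α β η μ k x τ := by
  have hx : 0 < x := hτ.trans_le hτx
  have hk1 : 0 < k + 1 := by linarith
  have hΓ := Real.Gamma_pos_of_pos hα
  have hsub : 0 ≤ x ^ (k + 1) - τ ^ (k + 1) :=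
    sub_nonneg.2 (Real.rpow_le_rpow hτ.le hτx hk1.le)
  have hz : 0 ≤ 1 - (τ / x) ^ (k + 1) :=
    sub_nonneg.2 (Real.rpow_le_one (by positivity) ((div_le_one hx).2 hτx) hk1.le)
  have hF := gauss2F1_nonneg hs (neg_pos.2 hη) hα hz
  have hp := Real.rpow_nonneg hsub (α - 1)
  unfold Fker
  positivity

/-- If `f` is monotone and `g` antitone on `[0, ∞)`, both positive, then `(f τ ^ γ - f ρ ^ γ) * (g ρ ^ δ - g τ ^ δ) ≥ 0`;
this is the expanded form of that inequality. -/
lemma mul_add_mul_le_of_opposite {f g : ℝ → ℝ} {γ δ ρ τ : ℝ}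
    (hfpos : ∀ t ∈ Ici (0 : ℝ), 0 < f t) (hgpos : ∀ t ∈ Ici (0 : ℝ), 0 < g t)
    (hγ : 0 < γ) (hδ : 0 < δ) (hmono : MonotoneOn f (Ici 0)) (hanti : AntitoneOn g (Ici 0))
    (hρ : ρ ∈ Ici (0 : ℝ)) (hτ : τ ∈ Ici (0 : ℝ)) :
    f τ ^ γ * g τ ^ δ + f ρ ^ γ * g ρ ^ δ ≤ g ρ ^ δ * f τ ^ γ + f ρ ^ γ * g τ ^ δ := by
  rcases le_total τ ρ with h | h
  · have h1 := Real.rpow_le_rpow (hfpos τ hτ).le (hmono hτ hρ h) hγ.le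
    have h2 := Real.rpow_le_rpow (hgpos ρ hρ).le (hanti hτ hρ h) hδ.le
    linarith [mul_nonneg (sub_nonneg.2 h1) (sub_nonneg.2 h2)]
  · have h1 := Real.rpow_le_rpow (hfpos ρ hρ).le (hmono hρ hτ h) hγ.le
    have h2 := Real.rpow_le_rpow (hgpos τ hτ).le (hanti hρ hτ h) hδ.le
    linarith [mul_nonneg (sub_nonneg.2 h1) (sub_nonneg.2 h2)]

theorem chebyshev_pointwise (α β η μ k x : ℝ)
    (hk : 0 ≤ k) (hα : max 0 (-β - μ) < α) (hβ : β < 1) (hμ : -1 < μ)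
    (hη1 : β - 1 < η) (hη2 : η < 0) (hx : 0 < x) (γ δ : ℝ) (f g : ℝ → ℝ)
    (hfc : ContinuousOn f (Ici 0)) (hgc : ContinuousOn g (Ici 0))
    (hfpos : ∀ t ∈ Ici (0:ℝ), 0 < f t) (hgpos : ∀ t ∈ Ici (0:ℝ), 0 < g t)
    (hγ : 0 < γ) (hδ : 0 < δ)
    (hmono : MonotoneOn f (Ici 0)) (hanti : AntitoneOn g (Ici 0))
    (hfin_fg : IntervalIntegrable (fun τ => Fker α β η μ k x τ * τ ^ k * (f τ ^ γ * g τ ^ δ)) volume 0 x)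
    (hfin_f : IntervalIntegrable (fun τ => Fker α β η μ k x τ * τ ^ k * (f τ ^ γ)) volume 0 x)
    (hfin_g : IntervalIntegrable (fun τ => Fker α β η μ k x τ * τ ^ k * (g τ ^ δ)) volume 0 x)
    (hfin_one : IntervalIntegrable (fun τ => Fker α β η μ k x τ * τ ^ k * ((1:ℝ))) volume 0 x) :
    ∀ ρ ∈ Ioo (0:ℝ) x,
      (genKInt α β η μ k x (fun τ => f τ ^ γ * g τ ^ δ)) + f ρ ^ γ * g ρ ^ δ * (genKInt α β η μ k x (fun τ => (1:ℝ))) ≤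
        g ρ ^ δ * (genKInt α β η μ k x (fun τ => f τ ^ γ)) + f ρ ^ γ * (genKInt α β η μ k x (fun τ => g τ ^ δ)) := by
  intro ρ hρ
  have hα0 : 0 < α := (le_max_left _ _).trans_lt hα
  have hs : 0 < α + β + μ := by linarith [(le_max_right 0 (-β - μ)).trans_lt hα]
  unfold genKInt
  rw [← intervalIntegral.integral_const_mul, ← intervalIntegral.integral_const_mul,
    ← intervalIntegral.integral_const_mul,
    ← intervalIntegral.integral_add hfin_fg (hfin_one.const_mul _),
    ← intervalIntegral.integral_add (hfin_f.const_mul _) (hfin_g.const_mul _)]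
  refine intervalIntegral.integral_mono_on_of_le_Ioo hx.le
    (hfin_fg.add (hfin_one.const_mul _))
    ((hfin_f.const_mul _).add (hfin_g.const_mul _)) fun τ hτ => ?_
  have hK : 0 ≤ Fker α β η μ k x τ * τ ^ k :=
    mul_nonneg (Fker_nonneg hk hα0 hs hη2 hτ.1 hτ.2.le) (Real.rpow_nonneg hτ.1.le k)
  have hfg := mul_add_mul_le_of_opposite hfpos hgpos hγ hδ hmono hanti
    (mem_Ici.2 hρ.1.le) (mem_Ici.2 hτ.1.le)
  linarith [mul_le_mul_of_nonneg_left hfg hK]
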